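/- Fix k ∈ ℤ. For every continuously differentiable u: ℝ → ℝ satisfying u(x+1) = u(x) − 2πk for all x, with ∫₀¹ sin(u(x)) dx = 0 and ∫₀¹ cos(u(x)) dx < 0, there exists a unique pair (v, n) with n ∈ ℤ and v: ℝ → ℝ continuous, 1-periodic, ∫₀¹ v = kπ and ∫₀¹ exp(2i(∂ₓ⁻¹v)(x)) dx ≠ 0, such that u(x) = 2(∂ₓ⁻¹v)(−x) + c_sg(v) + π + 2πn for all x, where c_sg(v) is taken with arg valued in (−π, π]; moreover v(x) = −u′(−x)/2. Conversely, for every such v the function x ↦ 2(∂ₓ⁻¹v)(−x) + c_sg(v) + π is continuously differentiable of topological charge −k with ∫₀¹ sin = 0 and ∫₀¹ cos < 0. -/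

import Mathlib

open MeasureTheory Real intervalIntegral

/-- The mean-zero antiderivative of a (continuous, 1-periodic, mean-zero) function:
`(∂ₓ⁻¹ f)(x) = ∫₀ˣ f(s) ds − ∫₀¹ ∫₀ʸ f(s) ds dy`. -/
noncomputable def pInv (f : ℝ → ℝ) (x : ℝ) : ℝ :=
  (∫ s in (0:ℝ)..x, f s) - ∫ y in (0:ℝ)..1, ∫ s in (0:ℝ)..y, f s

/-- Extension of `∂ₓ⁻¹` to a 1-periodic `v` of mean `a = ∫₀¹ v`:
`(∂ₓ⁻¹ v)(x) = (∂ₓ⁻¹ (v − a))(x) + a·x`. -/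
noncomputable def pInvG (v : ℝ → ℝ) (x : ℝ) : ℝ :=
  pInv (fun s => v s - ∫ t in (0:ℝ)..1, v t) x + (∫ t in (0:ℝ)..1, v t) * x

/-- `K_{sg}(v) = ∫₀¹ exp (2 i (∂ₓ⁻¹ v)(x)) dx`. -/
noncomputable def Ksg (v : ℝ → ℝ) : ℂ :=
  ∫ x in (0:ℝ)..1, Complex.exp (2 * (pInvG v x : ℂ) * Complex.I)

/-- `c_sg(v) = - arg (∫₀¹ exp (2 i (∂ₓ⁻¹ v)(x)) dx)`, with `arg` valued in `(-π, π]`. -/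
noncomputable def cSg (v : ℝ → ℝ) : ℝ := - (Ksg v).arg

-- HELPERS
theorem aux_pInvG_eq (v : ℝ → ℝ) (hv : Continuous v) (x : ℝ) :
    pInvG v x = (∫ s in (0:ℝ)..x, v s) + pInvG v 0 := by
  unfold pInvG pInv
  rw [intervalIntegral.integral_sub (hv.intervalIntegrable _ _) (by simp)]
  simp
  ring

theorem aux_pInvG_deriv (v : ℝ → ℝ) (hv : Continuous v) (x : ℝ) :
    HasDerivAt (pInvG v) (v x) x := by
  have h : pInvG v = fun x => (∫ s in (0:ℝ)..x, v s) + pInvG v 0 :=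
    funext (aux_pInvG_eq v hv)
  rw [h]
  exact (hv.integral_hasStrictDerivAt 0 x).hasDerivAt.add_const _

theorem aux_pInvG_cont (v : ℝ → ℝ) (hv : Continuous v) : Continuous (pInvG v) :=
  continuous_iff_continuousAt.2 fun x => (aux_pInvG_deriv v hv x).continuousAt

theorem aux_pInvG_shift (v : ℝ → ℝ) (hv : Continuous v) (hp : Function.Periodic v 1) (x : ℝ) :
    pInvG v (x + 1) = pInvG v x + ∫ t in (0:ℝ)..1, v t := by
  rw [aux_pInvG_eq v hv (x + 1), aux_pInvG_eq v hv x,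
    ← intervalIntegral.integral_add_adjacent_intervals (hv.intervalIntegrable 0 x)
      (hv.intervalIntegrable x (x + 1)), hp.intervalIntegral_add_eq x 0]
  simp
  ring

theorem aux_exp_int (w : ℝ → ℝ) (hw : Continuous w) :
    (∫ x in (0:ℝ)..1, Complex.exp ((w x : ℂ) * Complex.I)) =
      ((∫ x in (0:ℝ)..1, Real.cos (w x) : ℝ) : ℂ) +
        ((∫ x in (0:ℝ)..1, Real.sin (w x) : ℝ) : ℂ) * Complex.I := by
  rw [← intervalIntegral.integral_ofReal, ← intervalIntegral.integral_ofReal,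
    ← intervalIntegral.integral_mul_const, ← intervalIntegral.integral_add]
  · congr 1
    ext x
    rw [Complex.exp_mul_I, Complex.ofReal_cos, Complex.ofReal_sin]
  · exact Continuous.intervalIntegrable (by fun_prop) _ _
  · exact Continuous.intervalIntegrable (by fun_prop) _ _

theorem aux_int_K (k : ℤ) (v : ℝ → ℝ) (hv : Continuous v) (hp : Function.Periodic v 1)
    (hk : (∫ x in (0:ℝ)..1, v x) = k * π) (C : ℝ) :
    (∫ x in (0:ℝ)..1, Complex.exp (((2 * pInvG v (-x) + C : ℝ) : ℂ) * Complex.I)) =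
      Complex.exp (C * Complex.I) * Ksg v := by
  have hper : Function.Periodic (fun x => Complex.exp (2 * (pInvG v x : ℂ) * Complex.I)) 1 := by
    intro x
    simp only
    rw [aux_pInvG_shift v hv hp, hk]
    rw [Complex.exp_eq_exp_iff_exists_int]
    refine ⟨k, ?_⟩
    push_cast
    ring
  have h1 : (∫ x in (0:ℝ)..1, Complex.exp (2 * (pInvG v (-x) : ℂ) * Complex.I)) = Ksg v := by
    rw [intervalIntegral.integral_comp_neg
      (fun x => Complex.exp (2 * (pInvG v x : ℂ) * Complex.I))]
    have := hper.intervalIntegral_add_eq (-1) 0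
    simp only [neg_add_cancel, zero_add] at this
    rw [neg_zero, this, Ksg]
  rw [← h1, ← intervalIntegral.integral_const_mul]
  congr 1
  ext x
  rw [← Complex.exp_add]
  congr 1
  push_cast
  ring

theorem aux_conv (k : ℤ) (v : ℝ → ℝ) (hv : Continuous v) (hp : Function.Periodic v 1)
    (hk : (∫ x in (0:ℝ)..1, v x) = k * π) :
    (∫ x in (0:ℝ)..1, Real.cos (2 * pInvG v (-x) + cSg v + π)) = - ‖Ksg v‖ ∧
    (∫ x in (0:ℝ)..1, Real.sin (2 * pInvG v (-x) + cSg v + π)) = 0 := by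
  have hc := aux_pInvG_cont v hv
  have h1 := aux_int_K k v hv hp hk (cSg v + π)
  have h2 := aux_exp_int (fun x => 2 * pInvG v (-x) + (cSg v + π)) (by fun_prop)
  rw [h1] at h2
  have h3 : Complex.exp ((cSg v + π : ℝ) * Complex.I) * Ksg v = ((-‖Ksg v‖ : ℝ) : ℂ) := by
    conv_lhs => rw [← Complex.norm_mul_exp_arg_mul_I (Ksg v)]
    unfold cSg
    rw [mul_left_comm, ← Complex.exp_add]
    have : (((-(Ksg v).arg + π : ℝ) : ℂ) * Complex.I + (Ksg v).arg * Complex.I)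
        = π * Complex.I := by push_cast; ring
    rw [this, Complex.exp_pi_mul_I]
    push_cast; ring
  rw [h3] at h2
  have hr := congrArg Complex.re h2
  have hi := congrArg Complex.im h2
  simp only [Complex.add_re, Complex.add_im, Complex.ofReal_re, Complex.ofReal_im,
    Complex.re_ofReal_mul, Complex.im_ofReal_mul, Complex.I_re, Complex.I_im, mul_zero, mul_one,
    add_zero, zero_add, ← add_assoc] at hr hi
  exact ⟨hr.symm, hi.symm⟩

theorem aux_contDiff (v : ℝ → ℝ) (hv : Continuous v) : ContDiff ℝ 1 (pInvG v) := by
  rw [contDiff_one_iff_deriv]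
  refine ⟨fun x => (aux_pInvG_deriv v hv x).differentiableAt, ?_⟩
  have : deriv (pInvG v) = v := funext fun x => (aux_pInvG_deriv v hv x).deriv
  rwa [this]

theorem aux_v (v u : ℝ → ℝ) (hv : Continuous v) (C : ℝ)
    (h : ∀ x, u x = 2 * pInvG v (-x) + C) : v = fun x => - deriv u (-x) / 2 := by
  have hu : u = fun x => 2 * pInvG v (-x) + C := funext h
  ext x
  have h1 := (((aux_pInvG_deriv v hv (- -x)).comp (-x) (hasDerivAt_neg (-x))).const_mul 2).add_const C
  have h2 : deriv u (-x) = 2 * (v (- -x) * -1) := by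
    rw [hu]; exact h1.deriv
  rw [h2, neg_neg]; ring

theorem aux_exists (k : ℤ) (u : ℝ → ℝ) (hu : ContDiff ℝ 1 u)
    (hs : ∀ x, u (x + 1) = u x - 2 * π * k)
    (hsin : (∫ x in (0:ℝ)..1, Real.sin (u x)) = 0)
    (hcos : (∫ x in (0:ℝ)..1, Real.cos (u x)) < 0) :
    ∃ p : (ℝ → ℝ) × ℤ,
        Continuous p.1 ∧ Function.Periodic p.1 1 ∧
        (∫ x in (0:ℝ)..1, p.1 x) = k * π ∧ Ksg p.1 ≠ 0 ∧
        ∀ x, u x = 2 * pInvG p.1 (-x) + cSg p.1 + π + 2 * π * p.2 := by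
  obtain ⟨hd, hdc⟩ := contDiff_one_iff_deriv.1 hu
  obtain ⟨v, hvdef⟩ : ∃ v : ℝ → ℝ, v = fun x => - deriv u (-x) / 2 := ⟨_, rfl⟩
  have hv : Continuous v := by rw [hvdef]; fun_prop
  have hdp : ∀ x, deriv u (x + 1) = deriv u x := by
    intro x
    rw [← deriv_comp_add_const]
    have : (fun x => u (x + 1)) = fun x => u x - 2 * π * k := funext hs
    rw [this, deriv_sub_const]
  have hp : Function.Periodic v 1 := by
    intro x
    have := hdp (-(x + 1))
    rw [show -(x + 1) + 1 = -x by ring] at this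
    simp only [hvdef, this]
  have hconst : ∀ x, u x - 2 * pInvG v (-x) = u 0 - 2 * pInvG v (-0) := by
    intro x
    have hD : ∀ x, HasDerivAt (fun x => u x - 2 * pInvG v (-x)) 0 x := by
      intro x
      have h1 := ((aux_pInvG_deriv v hv (-x)).comp x (hasDerivAt_neg x)).const_mul 2
      have h2 := (hd x).hasDerivAt.sub h1
      have e : v (-x) = - deriv u x / 2 := by rw [hvdef]; simp only [neg_neg]
      have e2 : deriv u x - 2 * (v (-x) * -1) = 0 := by rw [e]; ring
      rw [e2] at h2
      exact h2
    exact is_const_of_deriv_eq_zero (f := fun x => u x - 2 * pInvG v (-x))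
      (fun x => (hD x).differentiableAt) (fun x => (hD x).deriv) x 0
  obtain ⟨C, hCdef⟩ : ∃ C, C = u 0 - 2 * pInvG v (-0) := ⟨_, rfl⟩
  have hC : ∀ x, u x = 2 * pInvG v (-x) + C := by
    intro x; have := hconst x; linarith
  have hk : (∫ x in (0:ℝ)..1, v x) = k * π := by
    have h1 := aux_pInvG_shift v hv hp 0
    have h2 := hC 0
    have h3 := hC (-1)
    have h4 := hs (-1)
    simp only [neg_neg, zero_add, neg_zero, neg_add_cancel] at h1 h2 h3 h4
    linarith
  have h1 := aux_int_K k v hv hp hk C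
  simp only [← hC] at h1
  rw [aux_exp_int u hu.continuous, hsin] at h1
  obtain ⟨r, hr⟩ : ∃ r, r = ∫ x in (0:ℝ)..1, Real.cos (u x) := ⟨_, rfl⟩
  rw [← hr] at h1 hcos
  simp only [Complex.ofReal_zero, zero_mul, add_zero] at h1
  have hr0 : (r : ℂ) ≠ 0 := by exact_mod_cast hcos.ne
  have hK : Ksg v ≠ 0 := by
    intro h0; rw [h0, mul_zero] at h1; exact hr0 h1
  have hnorm : ‖Ksg v‖ = -r := by
    have := congrArg norm h1
    rw [norm_mul, Complex.norm_exp_ofReal_mul_I, one_mul, Complex.norm_real, Real.norm_eq_abs,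
      abs_of_neg hcos] at this
    exact this.symm
  have h2 : Complex.exp (C * Complex.I + (Ksg v).arg * Complex.I)
      = Complex.exp (π * Complex.I) := by
    rw [← Complex.norm_mul_exp_arg_mul_I (Ksg v), hnorm, mul_left_comm, ← Complex.exp_add] at h1
    rw [Complex.exp_pi_mul_I]
    apply mul_left_cancel₀ hr0
    push_cast at h1
    linear_combination h1
  obtain ⟨n, hn⟩ := Complex.exp_eq_exp_iff_exists_int.1 h2
  have h3 : C + (Ksg v).arg = π + 2 * π * n := by
    have := congrArg Complex.im hn
    simpa [mul_comm, mul_left_comm, mul_assoc] using this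
  refine ⟨(v, n), hv, hp, hk, hK, fun x => ?_⟩
  simp only
  rw [hC x, cSg]
  linarith

/-- parametrization of the branch `P⁻`: every C¹ function `u` with
`u(x+1) = u(x) − 2πk`, `∫₀¹ sin u = 0` and `∫₀¹ cos u < 0` is uniquely of the form
`u(x) = 2(∂ₓ⁻¹v)(−x) + c_sg(v) + π (mod 2π)` with `v(x) = −u'(−x)/2`, and conversely. -/
theorem psiSgMinus_parametrization (k : ℤ) :
    (∀ u : ℝ → ℝ, ContDiff ℝ 1 u → (∀ x, u (x + 1) = u x - 2 * π * k) →
      (∫ x in (0:ℝ)..1, Real.sin (u x)) = 0 →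
      (∫ x in (0:ℝ)..1, Real.cos (u x)) < 0 →
      (∃! p : (ℝ → ℝ) × ℤ,
        Continuous p.1 ∧ Function.Periodic p.1 1 ∧
        (∫ x in (0:ℝ)..1, p.1 x) = k * π ∧ Ksg p.1 ≠ 0 ∧
        ∀ x, u x = 2 * pInvG p.1 (-x) + cSg p.1 + π + 2 * π * p.2) ∧
      (∀ p : (ℝ → ℝ) × ℤ,
        (Continuous p.1 ∧ Function.Periodic p.1 1 ∧
          (∫ x in (0:ℝ)..1, p.1 x) = k * π ∧ Ksg p.1 ≠ 0 ∧
          ∀ x, u x = 2 * pInvG p.1 (-x) + cSg p.1 + π + 2 * π * p.2) →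
        p.1 = fun x => - deriv u (-x) / 2)) ∧
    (∀ v : ℝ → ℝ, Continuous v → Function.Periodic v 1 →
      (∫ x in (0:ℝ)..1, v x) = k * π → Ksg v ≠ 0 →
      ContDiff ℝ 1 (fun x => 2 * pInvG v (-x) + cSg v + π) ∧
      (∀ x, 2 * pInvG v (-(x + 1)) + cSg v + π
          = (2 * pInvG v (-x) + cSg v + π) + 2 * π * (-k)) ∧
      (∫ x in (0:ℝ)..1, Real.sin (2 * pInvG v (-x) + cSg v + π)) = 0 ∧
      (∫ x in (0:ℝ)..1, Real.cos (2 * pInvG v (-x) + cSg v + π)) < 0) := by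
  refine ⟨fun u hu hs hsin hcos => ?_, fun v hv hp hk hK => ?_⟩
  · have key : ∀ p : (ℝ → ℝ) × ℤ,
        (Continuous p.1 ∧ Function.Periodic p.1 1 ∧
          (∫ x in (0:ℝ)..1, p.1 x) = k * π ∧ Ksg p.1 ≠ 0 ∧
          ∀ x, u x = 2 * pInvG p.1 (-x) + cSg p.1 + π + 2 * π * p.2) →
        p.1 = fun x => - deriv u (-x) / 2 := by
      rintro p ⟨hv, -, -, -, h⟩
      exact aux_v p.1 u hv (cSg p.1 + π + 2 * π * p.2) fun x => by rw [h x]; ring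
    refine ⟨?_, key⟩
    obtain ⟨p, h⟩ := aux_exists k u hu hs hsin hcos
    refine ⟨p, h, fun q hq => ?_⟩
    have e : q.1 = p.1 := (key q hq).trans (key p h).symm
    refine Prod.ext e ?_
    have h1 := h.2.2.2.2 0
    have h2 := hq.2.2.2.2 0
    rw [e] at h2
    have h3 : 2 * π * (q.2 : ℝ) = 2 * π * (p.2 : ℝ) := by linarith
    have h4 := mul_left_cancel₀ (by positivity) h3
    exact_mod_cast h4
  · have hc := aux_contDiff v hv
    obtain ⟨h1, h2⟩ := aux_conv k v hv hp hk
    refine ⟨by fun_prop, fun x => ?_, h2, ?_⟩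
    · have := aux_pInvG_shift v hv hp (-(x + 1))
      rw [show -(x + 1) + 1 = -x by ring, hk] at this
      rw [this]; ring
    · rw [h1]
      simpa using hK
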